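/- arXiv:math/0010157 — 3 statements merged into one kernel-verified Lean document; each statement's English description precedes it below -/
import Mathlib

section
/- Fix an integer n ≥ 1 and an integer k with 0 ≤ k ≤ n. Then the function ξ_k : (0,∞) → ℂ is infinitely differentiable and satisfies the (n+1)-st order linear ordinary differential equation D^{n+1} ξ_k (h) = h^{−(n+1)}·ξ_k(h) for all h > 0, where D is the operator (Dφ)(h) := −(h/(n+1))·φ'(h). -/
open Complex

/-- The generating series `F_n(α,h) = h^{-(n+1)α} Σ_d h^{-(n+1)d} Γ(α+d+1)^{-(n+1)}`
of hypergeometric type. -/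
noncomputable def mirrorF (n : ℕ) (α : ℂ) (h : ℝ) : ℂ :=
  Complex.exp (-((n : ℂ) + 1) * α * (Real.log h : ℂ)) *
    ∑' d : ℕ, ((h : ℂ) ^ ((n + 1) * d))⁻¹ * ((Complex.Gamma (α + d + 1))⁻¹) ^ (n + 1)

/-- The differential operator `(Dφ)(h) = -(h/(n+1))·φ'(h)`. -/
noncomputable def mirrorD (n : ℕ) (φ : ℝ → ℂ) : ℝ → ℂ :=
  fun h => -((h : ℂ) / ((n : ℂ) + 1)) * deriv φ h

/-- `ξ_k(h)`, the `k`-th Taylor coefficient at `α = 0` of `α ↦ F_n(α,h)`. -/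
noncomputable def mirrorXi (n k : ℕ) (h : ℝ) : ℂ :=
  (1 / (k.factorial : ℂ)) * iteratedDeriv k (fun α : ℂ => mirrorF n α h) 0

open scoped BoundedContinuousFunction

/-- The `d`-th term of the series after applying `D` `m` times, with `h = exp t`. -/
noncomputable def mT (n m d : ℕ) (t : ℝ) (z : ℂ) : ℂ :=
  Complex.exp (-((n : ℂ) + 1) * (z + d) * t) * (z + d) ^ m *
    ((Complex.Gamma (z + d + 1))⁻¹) ^ (n + 1)

lemma mGamma_bound : ∃ M : ℝ, 0 ≤ M ∧ ∀ (d : ℕ) (z : ℂ), ‖z‖ ≤ 1 / 2 →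
    ‖(Complex.Gamma (z + d + 1))⁻¹‖ ≤ M * 2 ^ d / d.factorial := by
  have hc : Continuous fun z : ℂ => (Complex.Gamma (z + 1))⁻¹ :=
    Complex.differentiable_one_div_Gamma.continuous.comp (continuous_id.add continuous_const)
  obtain ⟨M, hM⟩ := (isCompact_closedBall (0 : ℂ) (1 / 2)).exists_bound_of_continuousOn
    hc.continuousOn
  refine ⟨M, (norm_nonneg _).trans (hM 0 (by simp)), ?_⟩
  intro d z hz
  induction d with
  | zero => simpa using hM z (by simpa using hz)
  | succ d ih =>
    have h1 := Complex.one_div_Gamma_eq_self_mul_one_div_Gamma_add_one (z + d + 1)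
    rw [h1, norm_mul] at ih
    have h2 : ((d : ℝ) + 1) / 2 ≤ ‖z + d + 1‖ := by
      have h3 : ‖((d : ℂ) + 1)‖ = (d : ℝ) + 1 := by
        have := Complex.norm_natCast (d + 1)
        push_cast at this
        exact this
      have h4 := norm_sub_le (z + d + 1) z
      have h5 : z + d + 1 - z = (d : ℂ) + 1 := by ring
      rw [h5, h3] at h4
      have : (0 : ℝ) ≤ d := Nat.cast_nonneg d
      linarith
    have h6 : z + ((d + 1 : ℕ) : ℂ) + 1 = z + d + 1 + 1 := by push_cast; ring
    rw [h6]
    have h7 : ((d : ℝ) + 1) / 2 * ‖(Complex.Gamma (z + d + 1 + 1))⁻¹‖ ≤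
        M * 2 ^ d / d.factorial :=
      (mul_le_mul_of_nonneg_right h2 (norm_nonneg _)).trans ih
    have h8 : M * 2 ^ (d + 1) / ((d + 1).factorial : ℝ) =
        (M * 2 ^ d / d.factorial) / (((d : ℝ) + 1) / 2) := by
      rw [Nat.factorial_succ]
      push_cast
      have : (d.factorial : ℝ) ≠ 0 := by positivity
      field_simp
      ring
    rw [h8, le_div_iff₀ (by positivity)]
    linarith

lemma mT_bound (n m : ℕ) (R : ℝ) : ∃ u : ℕ → ℝ, Summable u ∧ (∀ d, 0 ≤ u d) ∧
    ∀ (d : ℕ) (t : ℝ) (z : ℂ), |t| ≤ R → ‖z‖ ≤ 1 / 2 → ‖mT n m d t z‖ ≤ u d := by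
  obtain ⟨M, hM0, hM⟩ := mGamma_bound
  set c : ℝ := ((n : ℝ) + 1) * R + m with hc
  refine ⟨fun d => Real.exp c * M ^ (n + 1) *
    ((Real.exp c * 2 ^ (n + 1)) ^ d / d.factorial), ?_, ?_, ?_⟩
  · exact (Real.summable_pow_div_factorial _).mul_left _
  · intro d; positivity
  · intro d t z ht hz
    have hR : 0 ≤ R := (abs_nonneg t).trans ht
    have hzd : ‖z + d‖ ≤ (d : ℝ) + 1 := by
      refine (norm_add_le _ _).trans ?_
      rw [Complex.norm_natCast]; linarith
    have e1 : ‖Complex.exp (-((n : ℂ) + 1) * (z + d) * t)‖ ≤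
        Real.exp (((n : ℝ) + 1) * (d + 1) * R) := by
      refine (Complex.norm_exp_le_exp_norm _).trans (Real.exp_le_exp.2 ?_)
      rw [norm_mul, norm_mul, norm_neg, Complex.norm_real, Real.norm_eq_abs]
      have h3 : ‖((n : ℂ) + 1)‖ = (n : ℝ) + 1 := by
        have := Complex.norm_natCast (n + 1)
        push_cast at this
        exact this
      rw [h3]
      gcongr
    have e2 : ‖(z + d) ^ m‖ ≤ Real.exp (m * ((d : ℝ) + 1)) := by
      rw [norm_pow, Real.exp_nat_mul]
      refine pow_le_pow_left₀ (norm_nonneg _) (hzd.trans ?_) _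
      have := Real.add_one_le_exp ((d : ℝ) + 1)
      linarith
    have e3 : ‖((Complex.Gamma (z + d + 1))⁻¹) ^ (n + 1)‖ ≤
        M ^ (n + 1) * (2 ^ (n + 1)) ^ d / d.factorial := by
      rw [norm_pow]
      refine (pow_le_pow_left₀ (norm_nonneg _) (hM d z hz) _).trans ?_
      rw [div_pow, mul_pow, ← pow_mul, ← pow_mul, mul_comm d]
      have h1 : (1 : ℝ) ≤ d.factorial := by exact_mod_cast Nat.one_le_iff_ne_zero.2 d.factorial_ne_zero
      have : (d.factorial : ℝ) ≤ (d.factorial : ℝ) ^ (n + 1) := le_self_pow₀ h1 (by simp)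
      gcongr
    rw [mT, norm_mul, norm_mul]
    calc _ ≤ Real.exp (((n : ℝ) + 1) * (d + 1) * R) * Real.exp (m * ((d : ℝ) + 1)) *
          (M ^ (n + 1) * (2 ^ (n + 1)) ^ d / d.factorial) := by gcongr
      _ = Real.exp c * Real.exp c ^ d * (M ^ (n + 1) * (2 ^ (n + 1)) ^ d / d.factorial) := by
          rw [← Real.exp_add, ← Real.exp_nat_mul, ← Real.exp_add]
          congr 2
          rw [hc]; ring
      _ = _ := by simp only [mul_pow]; ring

/-- The circle of radius `1/4`. -/
noncomputable def mC (θ : ℝ) : ℂ := circleMap 0 (1 / 4) θ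

lemma mC_norm (θ : ℝ) : ‖mC θ‖ = 1 / 4 := by simp [mC, circleMap]

lemma mC_cont : Continuous mC := continuous_circleMap _ _

lemma mT_diff (n m d : ℕ) (t : ℝ) : Differentiable ℂ (mT n m d t) := by
  have : Differentiable ℂ fun z : ℂ => (Complex.Gamma (z + d + 1))⁻¹ :=
    Complex.differentiable_one_div_Gamma.comp (by fun_prop)
  unfold mT
  fun_prop

noncomputable def bX : ℝ →ᵇ ℂ :=
  BoundedContinuousFunction.ofNormedAddCommGroup mC mC_cont (1 / 4) (fun θ => (mC_norm θ).le)

lemma exists_bA (n d : ℕ) : ∃ a : ℝ →ᵇ ℂ, ∀ θ, a θ = ((Complex.Gamma (mC θ + d + 1))⁻¹) ^ (n + 1) := by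
  obtain ⟨u, -, -, hu⟩ := mT_bound n 0 0
  have := (mT_diff n 0 d 0).continuous.comp mC_cont
  refine ⟨BoundedContinuousFunction.ofNormedAddCommGroup _ this (u d)
    (fun θ => hu d 0 _ (by simp) (by rw [mC_norm]; norm_num)), fun θ => ?_⟩
  simp [mT]

/-- Banach algebra valued terms. -/
lemma exists_bT (n : ℕ) : ∃ T : ℕ → ℕ → ℝ → (ℝ →ᵇ ℂ),
    (∀ m d t θ, T m d t θ = mT n m d t (mC θ)) ∧
    ∀ m d t, HasDerivAt (T m d) (-((n : ℂ) + 1) • T (m + 1) d t) t := by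
  choose a ha using exists_bA n
  let y : ℕ → (ℝ →ᵇ ℂ) := fun d => (-((n : ℂ) + 1)) • (bX + (d : ℝ →ᵇ ℂ))
  refine ⟨fun m d t => NormedSpace.exp (t • y d) * ((bX + (d : ℝ →ᵇ ℂ)) ^ m * a d), ?_, ?_⟩
  · intro m d t θ
    let φ : (ℝ →ᵇ ℂ) →+* ℂ :=
      { toFun := fun f => f θ
        map_one' := rfl
        map_mul' := fun _ _ => rfl
        map_zero' := rfl
        map_add' := fun _ _ => rfl }
    have hφ : Continuous φ := (BoundedContinuousFunction.evalCLM ℂ θ).continuous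
    have h1 : (NormedSpace.exp (t • y d)) θ = Complex.exp ((t • y d) θ) := by
      rw [Complex.exp_eq_exp_ℂ]
      exact NormedSpace.map_exp φ hφ _
    have h2 : (bX + (d : ℝ →ᵇ ℂ)) θ = mC θ + d := by
      simp [bX]
    have h3 : ((bX + (d : ℝ →ᵇ ℂ)) ^ m) θ = (mC θ + d) ^ m := by
      rw [← h2]; rfl
    have h4 : (t • y d) θ = -((n : ℂ) + 1) * (mC θ + d) * t := by
      have : (t • y d) θ = (t : ℂ) * (-((n : ℂ) + 1) * (bX + (d : ℝ →ᵇ ℂ)) θ) := by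
        simp [y]
        ring
      rw [this, h2]; ring
    rw [BoundedContinuousFunction.mul_apply, BoundedContinuousFunction.mul_apply, h1, h3, h4, ha,
      mT, ← mul_assoc]
  · intro m d t
    have := (hasDerivAt_exp_smul_const (y d) t).mul_const ((bX + (d : ℝ →ᵇ ℂ)) ^ m * a d)
    have he : NormedSpace.exp (t • y d) * y d * ((bX + (d : ℝ →ᵇ ℂ)) ^ m * a d) =
        -((n : ℂ) + 1) • (NormedSpace.exp (t • y d) * ((bX + (d : ℝ →ᵇ ℂ)) ^ (m + 1) * a d)) := by
      rw [pow_succ]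
      ext θ
      simp only [y, BoundedContinuousFunction.mul_apply, BoundedContinuousFunction.smul_apply,
        smul_eq_mul]
      ring
    rw [he] at this
    exact this

lemma exists_Psi (n : ℕ) : ∃ Ψ : ℕ → ℝ → (ℝ →ᵇ ℂ),
    (∀ m t θ, HasSum (fun d => mT n m d t (mC θ)) (Ψ m t θ)) ∧
    ∀ m t, HasDerivAt (Ψ m) (-((n : ℂ) + 1) • Ψ (m + 1) t) t := by
  obtain ⟨T, hT, hT'⟩ := exists_bT n
  have hb : ∀ m R, ∃ u : ℕ → ℝ, Summable u ∧ ∀ d t, |t| ≤ R → ‖T m d t‖ ≤ u d := by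
    intro m R
    obtain ⟨u, hu, hu0, hu1⟩ := mT_bound n m R
    refine ⟨u, hu, fun d t ht => ?_⟩
    rw [BoundedContinuousFunction.norm_le (hu0 d)]
    intro θ
    rw [hT]
    exact hu1 d t _ ht (by rw [mC_norm]; norm_num)
  have hs : ∀ m t, Summable fun d => T m d t := by
    intro m t
    obtain ⟨u, hu, hu1⟩ := hb m |t|
    exact Summable.of_norm_bounded hu fun d => hu1 d t le_rfl
  refine ⟨fun m t => ∑' d, T m d t, ?_, ?_⟩
  · intro m t θ
    have := (hs m t).hasSum.mapL (BoundedContinuousFunction.evalCLM ℂ θ)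
    simpa [hT] using this
  · intro m t
    obtain ⟨u, hu, hu1⟩ := hb (m + 1) (|t| + 1)
    rw [← tsum_const_smul'']
    refine hasDerivAt_tsum_of_isPreconnected (t := Metric.ball 0 (|t| + 1))
      (u := fun d => ‖-((n : ℂ) + 1)‖ * u d) (hu.mul_left _) Metric.isOpen_ball
      (convex_ball _ _).isPreconnected (fun d y _ => hT' m d y) ?_ (y₀ := t) ?_ (hs m t) ?_
    · intro d y hy
      rw [norm_smul]
      gcongr
      exact hu1 d y (by simpa using (mem_ball_zero_iff.1 hy).le)
    all_goals simp

/-- The Cauchy coefficient functional. -/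
lemma exists_L (k : ℕ) : ∃ L : (ℝ →ᵇ ℂ) →L[ℂ] ℂ, ∀ (F : ℂ → ℂ) (f : ℝ →ᵇ ℂ),
    DifferentiableOn ℂ F (Metric.ball 0 (1 / 2)) → (∀ θ, f θ = F (mC θ)) →
    L f = (1 / (k.factorial : ℂ)) * iteratedDeriv k F 0 := by
  let w : ℝ → ℂ := fun θ => (2 * Real.pi * Complex.I)⁻¹ * (deriv (circleMap 0 (1 / 4)) θ *
    (1 / (mC θ - 0) ^ (k + 1)))
  have hne : ∀ θ, mC θ ≠ 0 := fun θ h => by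
    have := mC_norm θ
    rw [h] at this
    norm_num at this
  have hw : Continuous w := by
    have h1 := mC_cont
    have h2 : Continuous (deriv (circleMap 0 (1 / 4))) := by
      have : deriv (circleMap 0 (1 / 4)) = fun θ => mC θ * Complex.I := by
        ext θ; simp [mC, deriv_circleMap]
      rw [this]; fun_prop
    have h3 : ∀ θ, (mC θ - 0) ^ (k + 1) ≠ 0 := fun θ => by
      rw [sub_zero]; exact pow_ne_zero _ (hne θ)
    simp only [w]
    fun_prop (disch := assumption)
  obtain ⟨B, hB⟩ := (isCompact_uIcc (a := 0) (b := 2 * Real.pi)).exists_bound_of_continuousOn hw.continuousOn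
  have hint : ∀ f : ℝ →ᵇ ℂ, IntervalIntegrable (fun θ => w θ * f θ) MeasureTheory.volume 0
      (2 * Real.pi) := fun f => (hw.mul f.continuous).intervalIntegrable _ _
  let L0 : (ℝ →ᵇ ℂ) →ₗ[ℂ] ℂ :=
    { toFun := fun f => ∫ θ in (0 : ℝ)..(2 * Real.pi), w θ * f θ
      map_add' := fun f g => by
        rw [← intervalIntegral.integral_add (hint f) (hint g)]
        simp [mul_add]
      map_smul' := fun c f => by
        rw [RingHom.id_apply, smul_eq_mul, ← intervalIntegral.integral_const_mul]
        congr 1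
        ext θ
        simp; ring }
  refine ⟨L0.mkContinuous (B * |2 * Real.pi - 0|) ?_, ?_⟩
  · intro f
    have := intervalIntegral.norm_integral_le_of_norm_le_const (a := 0) (b := 2 * Real.pi)
      (f := fun θ => w θ * f θ) (C := B * ‖f‖) (fun θ hθ => by
        rw [norm_mul]
        have h1 := hB θ (Set.uIoc_subset_uIcc hθ)
        have := (norm_nonneg _).trans h1
        gcongr
        exact f.norm_coe_le_norm θ)
    calc _ ≤ _ := this
      _ = _ := by ring
  · intro F f hF hf
    have h1 := (hF.mono (Metric.closedBall_subset_ball (by norm_num : (1 : ℝ) / 4 < 1 / 2))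
      ).circleIntegral_one_div_sub_center_pow_smul (by norm_num) k
    have h2 : L0 f = (2 * Real.pi * Complex.I)⁻¹ *
        ∮ z in C(0, 1 / 4), (1 / (z - 0) ^ (k + 1)) • F z := by
      rw [circleIntegral, ← intervalIntegral.integral_const_mul]
      change ∫ θ in (0 : ℝ)..(2 * Real.pi), w θ * f θ = _
      congr 1
      ext θ
      simp only [w, hf, smul_eq_mul, mC]
      ring
    change L0 f = _
    rw [h2, h1, smul_eq_mul]
    have := Complex.two_pi_I_ne_zero
    field_simp

lemma iter_zero (n k : ℕ) (hk : k ≤ n) (g : ℂ → ℂ) (hg : Differentiable ℂ g) :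
    iteratedDeriv k (fun z => z ^ (n + 1) * g z) 0 = 0 := by
  have ha : AnalyticAt ℂ (fun z => z ^ (n + 1) * g z) 0 :=
    (by fun_prop : Differentiable ℂ (fun z => z ^ (n + 1) * g z)).analyticAt 0
  refine (natCast_le_analyticOrderAt_iff_iteratedDeriv_eq_zero (n := n + 1) ha).1 ?_ k (by omega)
  rw [natCast_le_analyticOrderAt ha]
  exact ⟨g, hg.analyticAt 0, by simp⟩

lemma mF_eq (n : ℕ) (z : ℂ) (h : ℝ) (hh : 0 < h) :
    mirrorF n z h = ∑' d, mT n 0 d (Real.log h) z := by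
  rw [mirrorF, ← tsum_mul_left]
  congr 1
  ext d
  have : ((h : ℂ) ^ ((n + 1) * d))⁻¹ = Complex.exp (-((n : ℂ) + 1) * d * (Real.log h : ℂ)) := by
    have h1 : (h : ℂ) = Complex.exp (Real.log h : ℂ) := by
      rw [← Complex.ofReal_exp, Real.exp_log hh]
    conv_lhs => rw [h1]
    rw [← Complex.exp_nat_mul, ← Complex.exp_neg]
    congr 1
    push_cast
    ring
  rw [this, mT, pow_zero, mul_one, ← mul_assoc, ← Complex.exp_add]
  congr 2
  ring

lemma mT_zero (n : ℕ) (t : ℝ) (z : ℂ) : mT n (n + 1) 0 t z =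
    z ^ (n + 1) * mT n 0 0 t z := by
  simp [mT]; ring

lemma mT_succ (n d : ℕ) (t : ℝ) (z : ℂ) : mT n (n + 1) (d + 1) t z =
    Complex.exp (-((n : ℂ) + 1) * t) * mT n 0 d t z := by
  have h1 := Complex.one_div_Gamma_eq_self_mul_one_div_Gamma_add_one (z + d + 1)
  have h2 : z + ((d + 1 : ℕ) : ℂ) = z + d + 1 := by push_cast; ring
  rw [mT, mT, h2, h1, mul_pow, pow_zero, mul_one, ← mul_assoc, ← mul_assoc, ← Complex.exp_add]
  congr 3
  ring

lemma mT_tsum_diff (n m : ℕ) (t : ℝ) :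
    DifferentiableOn ℂ (fun z => ∑' d, mT n m d t z) (Metric.ball 0 (1 / 2)) := by
  obtain ⟨u, hu, -, hu1⟩ := mT_bound n m |t|
  exact Complex.differentiableOn_tsum_of_summable_norm hu
    (fun d => (mT_diff n m d t).differentiableOn) Metric.isOpen_ball
    (fun d z hz => hu1 d t z le_rfl (mem_ball_zero_iff.1 hz).le)

theorem mirrorXi_hypergeometric_ODE (n k : ℕ) (hn : 1 ≤ n) (hk : k ≤ n) :
    ContDiffOn ℝ (⊤ : ℕ∞) (mirrorXi n k) (Set.Ioi (0 : ℝ)) ∧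
    ∀ h : ℝ, 0 < h →
      (mirrorD n)^[n + 1] (mirrorXi n k) h = ((h : ℂ) ^ (n + 1))⁻¹ * mirrorXi n k h := by
  obtain ⟨Ψ, hΨ, hΨ'⟩ := exists_Psi n
  obtain ⟨L, hL⟩ := exists_L k
  have hxi : ∀ h : ℝ, 0 < h → mirrorXi n k h = L (Ψ 0 (Real.log h)) := by
    intro h hh
    rw [mirrorXi, hL _ _ (mT_tsum_diff n 0 (Real.log h)) (fun θ => (hΨ 0 _ θ).tsum_eq.symm)]
    congr 2
    ext z
    exact mF_eq n z h hh
  have hn1 : ((n : ℂ) + 1) ≠ 0 := Nat.cast_add_one_ne_zero n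
  have hLd : ∀ m t, HasDerivAt (fun t => L (Ψ m t)) (-((n : ℂ) + 1) * L (Ψ (m + 1) t)) t := by
    intro m t
    have := (L.restrictScalars ℝ).hasFDerivAt.comp_hasDerivAt t (hΨ' m t)
    simpa [Function.comp_def] using this
  have hsm : ∀ j : ℕ, ∀ m, ContDiff ℝ j (fun t => L (Ψ m t)) := by
    intro j
    induction j with
    | zero =>
      intro m
      exact contDiff_zero.2 (continuous_iff_continuousAt.2 fun t => (hLd m t).continuousAt)
    | succ j ih =>
      intro m
      push_cast
      rw [contDiff_succ_iff_deriv]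
      refine ⟨fun t => (hLd m t).differentiableAt, by simp, ?_⟩
      have : deriv (fun t => L (Ψ m t)) = fun t => -((n : ℂ) + 1) * L (Ψ (m + 1) t) :=
        funext fun t => (hLd m t).deriv
      rw [this]
      exact contDiff_const.mul (ih (m + 1))
  have hD : ∀ m, ∀ h : ℝ, 0 < h →
      (mirrorD n)^[m] (mirrorXi n k) h = L (Ψ m (Real.log h)) := by
    intro m
    induction m with
    | zero => exact hxi
    | succ m ih =>
      intro h hh
      rw [Function.iterate_succ_apply', mirrorD]
      have he : (mirrorD n)^[m] (mirrorXi n k) =ᶠ[nhds h] fun h => L (Ψ m (Real.log h)) := by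
        filter_upwards [lt_mem_nhds hh] with x hx using ih x hx
      have hd := (hLd m (Real.log h)).scomp h (Real.hasDerivAt_log hh.ne')
      have hd' : deriv (fun h => L (Ψ m (Real.log h))) h = _ := hd.deriv
      rw [he.deriv_eq, hd', Complex.real_smul]
      have : (h : ℂ) ≠ 0 := by exact_mod_cast hh.ne'
      push_cast
      field_simp
  refine ⟨?_, ?_⟩
  · have h1 : ContDiff ℝ (⊤ : ℕ∞) (fun t => L (Ψ 0 t)) := contDiff_infty.2 fun j => hsm j 0
    have h2 : ContDiffOn ℝ (⊤ : ℕ∞) Real.log (Set.Ioi (0 : ℝ)) :=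
      Real.contDiffOn_log.mono fun x hx => (ne_of_gt hx)
    exact (h1.comp_contDiffOn h2).congr fun h hh => hxi h hh
  · intro h hh
    rw [hD (n + 1) h hh, hxi h hh]
    set t := Real.log h with ht
    have hexp : ((h : ℂ) ^ (n + 1))⁻¹ = Complex.exp (-((n : ℂ) + 1) * t) := by
      have h1 : (h : ℂ) = Complex.exp (Real.log h : ℂ) := by
        rw [← Complex.ofReal_exp, Real.exp_log hh]
      rw [h1, ← Complex.exp_nat_mul, ← Complex.exp_neg]
      congr 1
      push_cast
      ring
    rw [hexp, ← smul_eq_mul, ← map_smul, ← sub_eq_zero, ← map_sub]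
    rw [hL (fun z => z ^ (n + 1) * mT n 0 0 t z) _
      ((by have := mT_diff n 0 0 t; fun_prop : Differentiable ℂ _).differentiableOn), iter_zero n k hk _ (mT_diff n 0 0 t), mul_zero]
    intro θ
    have h1 := hΨ (n + 1) t θ
    have h2 := (hΨ 0 t θ).mul_left (Complex.exp (-((n : ℂ) + 1) * t))
    rw [← hasSum_nat_add_iff' 1] at h1
    simp only [mT_succ, Finset.sum_range_one] at h1
    have h3 := h1.unique h2
    rw [mT_zero] at h3
    rw [BoundedContinuousFunction.sub_apply, BoundedContinuousFunction.smul_apply, smul_eq_mul,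
      ← h3]
    ring
end

section
/- Fix an integer n ≥ 1 and an integer k with 0 ≤ k ≤ n. Then as h → +∞ along the reals, ξ_k(h) − (−(n+1)·log h)^k/k! = O((log h)^{k−1}); that is, there exist constants C > 0 and h_0 > 1 such that |ξ_k(h) − (−(n+1)·log h)^k/k!| ≤ C·(log h)^{k−1} for all h ≥ h_0. -/
open Complex

/-- The power series part of `mirrorF`. -/
noncomputable def mirrorG (n : ℕ) (h : ℝ) (α : ℂ) : ℂ :=
  ∑' d : ℕ, ((h : ℂ) ^ ((n + 1) * d))⁻¹ * ((Complex.Gamma (α + d + 1))⁻¹) ^ (n + 1)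

lemma mirror_invGamma_bound : ∃ M : ℝ, 0 < M ∧ ∀ α : ℂ, ‖α‖ ≤ 1 / 2 → ∀ d : ℕ,
    ‖(Complex.Gamma (α + d + 1))⁻¹‖ ≤ 2 ^ d * M := by
  have hcont : Continuous fun α : ℂ => (Complex.Gamma (α + 1))⁻¹ :=
    Complex.differentiable_one_div_Gamma.continuous.comp (continuous_id.add continuous_const)
  obtain ⟨M, hM⟩ := (isCompact_closedBall (0 : ℂ) (1 / 2)).exists_bound_of_continuousOn
    hcont.continuousOn
  refine ⟨max M 1, by positivity, fun α hα d => ?_⟩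
  induction d with
  | zero =>
    have := hM α (by simpa using hα)
    simpa using Or.inl this
  | succ d ih =>
    have h1 := Complex.one_div_Gamma_eq_self_mul_one_div_Gamma_add_one (α + d + 1)
    rw [h1, norm_mul] at ih
    have h2 : (1 : ℝ) / 2 ≤ ‖α + d + 1‖ := by
      have h3 : ‖((d : ℂ) + 1)‖ = (d : ℝ) + 1 := by
        have : ((d : ℂ) + 1) = ((d + 1 : ℕ) : ℂ) := by push_cast; ring
        rw [this, Complex.norm_natCast]; push_cast; ring
      have h4 : ‖((d : ℂ) + 1)‖ ≤ ‖α + d + 1‖ + ‖α‖ := by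
        have := norm_sub_le (α + d + 1) α
        rwa [show α + d + 1 - α = (d : ℂ) + 1 by ring] at this
      have : (0 : ℝ) ≤ d := Nat.cast_nonneg d
      linarith
    have e : α + ((d + 1 : ℕ) : ℂ) + 1 = α + d + 1 + 1 := by push_cast; ring
    rw [e, pow_succ]
    have := mul_le_mul_of_nonneg_right h2 (norm_nonneg (Complex.Gamma (α + d + 1 + 1))⁻¹)
    linarith

lemma mirror_term_bound (n : ℕ) : ∃ B : ℝ, 0 < B ∧ ∀ h : ℝ, 4 ≤ h → ∀ α : ℂ, ‖α‖ ≤ 1 / 2 →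
    ∀ d : ℕ, ‖((h : ℂ) ^ ((n + 1) * d))⁻¹ * ((Complex.Gamma (α + d + 1))⁻¹) ^ (n + 1)‖
      ≤ B * (2 / h) ^ d := by
  obtain ⟨M, hM, hb⟩ := mirror_invGamma_bound
  refine ⟨M ^ (n + 1), by positivity, fun h hh α hα d => ?_⟩
  have hpos : 0 < h := by linarith
  rw [norm_mul, norm_inv, norm_pow, norm_pow, Complex.norm_real, Real.norm_of_nonneg hpos.le]
  calc (h ^ ((n + 1) * d))⁻¹ * ‖(Complex.Gamma (α + d + 1))⁻¹‖ ^ (n + 1)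
      ≤ (h ^ ((n + 1) * d))⁻¹ * (2 ^ d * M) ^ (n + 1) := by
        gcongr; exact hb α hα d
    _ = M ^ (n + 1) * (((2 / h) ^ d) ^ (n + 1)) := by
        rw [mul_pow, div_pow, div_pow, mul_comm (n + 1) d, pow_mul]; ring
    _ ≤ M ^ (n + 1) * (2 / h) ^ d := by
        gcongr
        apply pow_le_of_le_one (by positivity) _ (by omega)
        apply pow_le_one₀ (by positivity)
        rw [div_le_one hpos]; linarith

lemma mirrorG_facts (n : ℕ) : ∃ B : ℝ, 0 < B ∧ ∀ h : ℝ, 4 ≤ h →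
    DifferentiableOn ℂ (mirrorG n h) (Metric.ball 0 (1 / 2)) ∧
    (∀ α : ℂ, ‖α‖ ≤ 1 / 2 → ‖mirrorG n h α‖ ≤ B) ∧
    ‖mirrorG n h 0 - 1‖ ≤ B / h := by
  obtain ⟨B, hB, hb⟩ := mirror_term_bound n
  refine ⟨4 * B, by positivity, fun h hh => ?_⟩
  have hpos : 0 < h := by linarith
  have hr : 2 / h ≤ 1 / 2 := by rw [div_le_div_iff₀ hpos (by norm_num)]; linarith
  have hr0 : 0 ≤ 2 / h := by positivity
  have hs : HasSum (fun d : ℕ => B * (2 / h) ^ d) (B * (1 - 2 / h)⁻¹) :=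
    (hasSum_geometric_of_lt_one hr0 (by linarith)).mul_left B
  have hinv : (1 - 2 / h)⁻¹ ≤ 2 := by
    rw [inv_le_comm₀ (by linarith) (by norm_num)]; linarith
  refine ⟨?_, ?_, ?_⟩
  · refine differentiableOn_tsum_of_summable_norm hs.summable (fun d => ?_) Metric.isOpen_ball ?_
    · refine Differentiable.differentiableOn ?_
      refine Differentiable.const_mul (Differentiable.pow ?_ _) _
      exact Complex.differentiable_one_div_Gamma.comp
        ((differentiable_id.add_const _).add_const _)
    · intro d w hw
      exact hb h hh w (by simpa using (mem_ball_zero_iff.1 hw).le) d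
  · intro α hα
    have := tsum_of_norm_bounded hs (hb h hh α hα)
    refine this.trans ?_
    nlinarith
  · have hb0 := hb h hh 0 (by simp)
    have hsum := Summable.of_norm_bounded hs.summable hb0
    have hG : mirrorG n h 0 - 1 = ∑' d : ℕ, ((h : ℂ) ^ ((n + 1) * (d + 1)))⁻¹ *
        ((Complex.Gamma (0 + (d + 1 : ℕ) + 1))⁻¹) ^ (n + 1) := by
      unfold mirrorG
      rw [hsum.tsum_eq_zero_add]
      simp
    have hs2 := hs.mul_left (2 / h)
    rw [hG]
    refine (tsum_of_norm_bounded hs2 fun d => ?_).trans ?_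
    · refine (hb0 (d + 1)).trans (le_of_eq ?_)
      ring
    · rw [div_mul_eq_mul_div]
      refine div_le_div_of_nonneg_right ?_ hpos.le
      nlinarith

theorem mirrorXi_asymptotics (n k : ℕ) (hn : 1 ≤ n) (hk : k ≤ n) :
    ∃ C : ℝ, 0 < C ∧ ∃ h₀ : ℝ, 1 < h₀ ∧ ∀ h : ℝ, h₀ ≤ h →
      ‖mirrorXi n k h - (-((n : ℂ) + 1) * (Real.log h : ℂ)) ^ k / (k.factorial : ℂ)‖ ≤
        C * (Real.log h) ^ ((k : ℤ) - 1) := by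
  obtain ⟨B, hB, hfacts⟩ := mirrorG_facts n
  refine ⟨∑ i ∈ Finset.range k, (k.choose i : ℝ) * ((n : ℝ) + 1) ^ i *
      ((k - i).factorial * B / (1 / 4) ^ (k - i)) + ((n : ℝ) + 1) ^ k * B, by positivity,
      4, by norm_num, fun h hh => ?_⟩
  obtain ⟨hd, hbd, h0⟩ := hfacts h hh
  have hpos : 0 < h := by linarith
  have hL : 1 ≤ Real.log h := by
    rw [Real.le_log_iff_exp_le hpos]
    have := Real.exp_one_lt_d9
    linarith
  have hLh : Real.log h ≤ h := (Real.log_le_sub_one_of_pos hpos).trans (by linarith)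
  set L := Real.log h with hLdef
  have hLpos : 0 < L := by linarith
  set c : ℂ := -((n : ℂ) + 1) * (L : ℂ) with hc
  have hcn : ‖c‖ = ((n : ℝ) + 1) * L := by
    have : c = ((-(((n : ℝ) + 1) * L) : ℝ) : ℂ) := by rw [hc]; push_cast; ring
    rw [this, Complex.norm_real, norm_neg, Real.norm_of_nonneg (by positivity)]
  have hcd : ContDiffAt ℂ k (mirrorG n h) 0 :=
    (hd.analyticAt (Metric.ball_mem_nhds 0 (by norm_num))).contDiffAt
  have hfun : (fun α : ℂ => mirrorF n α h) = (fun α : ℂ => Complex.exp (c * α)) * mirrorG n h := by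
    funext α
    simp only [mirrorF, mirrorG, Pi.mul_apply, hc, hLdef]
    congr 2
    ring
  have hexp : ContDiffAt ℂ k (fun α : ℂ => Complex.exp (c * α)) 0 := by fun_prop
  have hcauchy : ∀ j : ℕ, ‖iteratedDeriv j (mirrorG n h) 0‖ ≤ j.factorial * B / (1 / 4) ^ j := by
    intro j
    refine Complex.norm_iteratedDeriv_le_of_forall_mem_sphere_norm_le j (by norm_num) ?_ ?_
    · refine DifferentiableOn.diffContOnCl_ball (U := Metric.ball 0 (1 / 2)) hd ?_
      exact Metric.closedBall_subset_ball (by norm_num)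
    · intro z hz
      refine hbd z ?_
      rw [mem_sphere_zero_iff_norm.1 hz]; norm_num
  have hxi : mirrorXi n k h - c ^ k / (k.factorial : ℂ) = (1 / (k.factorial : ℂ)) *
      (∑ i ∈ Finset.range k, (k.choose i : ℂ) * c ^ i * iteratedDeriv (k - i) (mirrorG n h) 0
        + c ^ k * (mirrorG n h 0 - 1)) := by
    unfold mirrorXi
    rw [hfun, iteratedDeriv_mul hexp hcd, Finset.sum_range_succ]
    simp only [iteratedDeriv_cexp_const_mul, mul_zero, Complex.exp_zero, mul_one, Nat.choose_self,
      Nat.sub_self, iteratedDeriv_zero, Nat.cast_one, one_mul]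
    ring
  rw [hxi, norm_mul]
  have hf : ‖(1 / (k.factorial : ℂ))‖ ≤ 1 := by
    rw [norm_div, norm_one, Complex.norm_natCast, div_le_one (by positivity)]
    exact_mod_cast Nat.succ_le_of_lt k.factorial_pos
  refine (mul_le_of_le_one_left (norm_nonneg _) hf).trans ?_
  refine (norm_add_le _ _).trans ?_
  rw [add_mul, Finset.sum_mul]
  refine add_le_add ((norm_sum_le _ _).trans (Finset.sum_le_sum fun i hi => ?_)) ?_
  · have hik := Finset.mem_range.1 hi
    rw [norm_mul, norm_mul, norm_pow, hcn, Complex.norm_natCast, mul_pow]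
    have hz : L ^ i ≤ L ^ ((k : ℤ) - 1) := by
      rw [← zpow_natCast]
      exact zpow_le_zpow_right₀ hL (by omega)
    calc (k.choose i : ℝ) * (((n : ℝ) + 1) ^ i * L ^ i) * ‖iteratedDeriv (k - i) (mirrorG n h) 0‖
        ≤ (k.choose i : ℝ) * (((n : ℝ) + 1) ^ i * L ^ ((k : ℤ) - 1)) *
          ((k - i).factorial * B / (1 / 4) ^ (k - i)) := by
          gcongr
          exact hcauchy _
      _ = _ := by ring
  · rw [norm_mul, norm_pow, hcn, mul_pow, zpow_sub₀ hLpos.ne', zpow_natCast, zpow_one]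
    calc ((n : ℝ) + 1) ^ k * L ^ k * ‖mirrorG n h 0 - 1‖
        ≤ ((n : ℝ) + 1) ^ k * L ^ k * (B / L) := by
          gcongr
          exact h0.trans (by gcongr)
      _ = _ := by ring
end

section
/- Let N ≥ 1, let U ⊆ ℂ^N be a nonempty open convex set, and let A_{abc} : ℂ^N → ℂ (a,b,c ∈ Fin N) be functions, infinitely differentiable over ℂ on U, that are symmetric under all permutations of the indices (a,b,c) and satisfy the closedness condition ∂_d A_{abc} = ∂_a A_{dbc} on U for all a, b, c, d. Let g be a symmetric invertible N×N complex matrix with inverse entries g^{ef}, and assume the associativity condition Σ_{e,f} A_{abe}·g^{ef}·A_{fcd} = Σ_{e,f} A_{ade}·g^{ef}·A_{fbc} holds on U for all a, b, c, d. Then there exists a function Φ : ℂ^N → ℂ, infinitely differentiable over ℂ on U, such that ∂_a∂_b∂_c Φ = A_{abc} on U for all a, b, c; in particular, Φ satisfies the WDVV equations: for all a, b, c, d, Σ_{e,f} (∂_a∂_b∂_e Φ)·g^{ef}·(∂_f∂_c∂_d Φ) = Σ_{e,f} (∂_a∂_d∂_e Φ)·g^{ef}·(∂_f∂_b∂_c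 Φ) on U. -/
open Complex

/-- Partial derivative `∂_aφ(t)` of a scalar function `φ : ℂ^N → ℂ` in the `a`-th
coordinate direction. -/
noncomputable def pdS {N : ℕ} (a : Fin N) (φ : (Fin N → ℂ) → ℂ) (t : Fin N → ℂ) : ℂ :=
  deriv (fun z : ℂ => φ (Function.update t a z)) (t a)

/-- Third partial derivative `∂_a∂_b∂_c φ`. -/
noncomputable def pdS3 {N : ℕ} (a b c : Fin N) (φ : (Fin N → ℂ) → ℂ)
    (t : Fin N → ℂ) : ℂ :=
  pdS a (fun s => pdS b (fun r => pdS c φ r) s) t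

section helpers
variable {E : Type*} [NormedAddCommGroup E] [NormedSpace ℂ E]

/-- Termwise primitive of a power series of one-forms. -/
noncomputable def primSeries (p : FormalMultilinearSeries ℂ E (E →L[ℂ] ℂ)) (c : ℂ) :
    FormalMultilinearSeries ℂ E ℂ
  | 0 => ContinuousMultilinearMap.constOfIsEmpty ℂ _ c
  | n + 1 => ((n : ℂ) + 1)⁻¹ • (p n).uncurryRight

lemma primSeries_succ_apply (p : FormalMultilinearSeries ℂ E (E →L[ℂ] ℂ)) (c : ℂ) (n : ℕ) (y : E) :
    (primSeries p c (n + 1) fun _ => y) = ((n : ℂ) + 1)⁻¹ * (p n (fun _ => y)) y := by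
  simp only [primSeries, ContinuousMultilinearMap.smul_apply, smul_eq_mul]
  rfl

lemma primSeries_norm_le (p : FormalMultilinearSeries ℂ E (E →L[ℂ] ℂ)) (c : ℂ) (n : ℕ) :
    ‖primSeries p c (n + 1)‖ ≤ ‖p n‖ := by
  let P : ContinuousMultilinearMap ℂ (fun _ : Fin (n + 1) => E) ℂ :=
    ContinuousMultilinearMap.uncurryRight (Ei := fun _ : Fin n.succ => E) (p n)
  have h3 : ‖P‖ = ‖p n‖ :=
    ContinuousMultilinearMap.uncurryRight_norm (Ei := fun _ : Fin n.succ => E) (p n)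
  have h1 : ‖primSeries p c (n + 1)‖ = ‖((n : ℂ) + 1)⁻¹‖ * ‖P‖ :=
    norm_smul ((n : ℂ) + 1)⁻¹ P
  have h2 : ‖((n : ℂ) + 1)⁻¹‖ ≤ 1 := by
    rw [norm_inv]
    apply inv_le_one_of_one_le₀
    have : ((n : ℂ) + 1) = ((n + 1 : ℕ) : ℂ) := by push_cast; rfl
    rw [this, Complex.norm_natCast]
    push_cast
    linarith [(Nat.cast_nonneg n : (0 : ℝ) ≤ n)]
  rw [h1, ← h3]
  exact mul_le_of_le_one_left (norm_nonneg P) h2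

lemma primSeries_radius (p : FormalMultilinearSeries ℂ E (E →L[ℂ] ℂ)) (c : ℂ) :
    p.radius ≤ (primSeries p c).radius := by
  apply ENNReal.le_of_forall_nnreal_lt
  intro r hr
  obtain ⟨C, hC, h⟩ := p.norm_mul_pow_le_of_lt_radius hr
  apply FormalMultilinearSeries.le_radius_of_bound _ (max ‖primSeries p c 0‖ (C * r))
  rintro (_ | n)
  · simp
  · refine le_trans ?_ (le_max_right _ _)
    rw [pow_succ, ← mul_assoc]
    gcongr
    refine le_trans ?_ (h n)
    gcongr
    exact primSeries_norm_le p c n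

/-- A function whose derivative is analytic on a neighbourhood is analytic. -/
lemma analyticAt_of_hasFDerivAt {f : E → ℂ} {w : E → E →L[ℂ] ℂ} {x : E} {U : Set E}
    (hU : IsOpen U) (hx : x ∈ U) (hf : ∀ t ∈ U, HasFDerivAt f (w t) t)
    (hw : AnalyticAt ℂ w x) : AnalyticAt ℂ f x := by
  obtain ⟨p, r0, hp0⟩ := hw
  obtain ⟨ε, hε, hεU⟩ := EMetric.isOpen_iff.1 hU x hx
  have hp := hp0.mono (lt_min hp0.r_pos hε) (min_le_left _ _)
  set r := min r0 ε with hr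
  refine ⟨primSeries p (f x), r, hp.r_le.trans (primSeries_radius _ _), hp.r_pos, ?_⟩
  intro y hy
  rw [← hasSum_nat_add_iff' 1]
  simp only [Finset.range_one, Finset.sum_singleton, primSeries_succ_apply]
  have h0 : (primSeries p (f x) 0 fun _ => y) = f x := rfl
  rw [h0]
  have hsy : ∀ s ∈ Set.Icc (0 : ℝ) 1, (s : ℂ) • y ∈ Metric.eball (0 : E) r := by
    intro s hs
    rw [Metric.mem_eball, edist_zero_right] at hy ⊢
    refine lt_of_le_of_lt ?_ hy
    rw [enorm_smul]
    refine mul_le_of_le_one_left zero_le ?_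
    rw [← ofReal_norm_eq_enorm, Complex.norm_real, Real.norm_of_nonneg hs.1]
    simpa using hs.2
  have hyU : ∀ s ∈ Set.Icc (0 : ℝ) 1, x + (s : ℂ) • y ∈ U := by
    intro s hs
    apply hεU
    have := hsy s hs
    simp only [Metric.mem_eball, edist_zero_right] at this ⊢
    rw [edist_eq_enorm_sub, add_sub_cancel_left]
    exact lt_of_lt_of_le this (min_le_right _ _)
  have hder : ∀ s ∈ Set.uIcc (0 : ℝ) 1,
      HasDerivAt (fun s : ℝ => f (x + (s : ℂ) • y)) (w (x + (s : ℂ) • y) y) s := by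
    intro s hs
    rw [Set.uIcc_of_le zero_le_one] at hs
    have h1 : HasDerivAt (fun z : ℂ => x + z • y) y (s : ℂ) := by
      simpa using ((hasDerivAt_id (s : ℂ)).smul_const y).const_add x
    exact ((hf _ (hyU s hs)).comp_hasDerivAt (s : ℂ) h1).comp_ofReal
  have hcont : ContinuousOn (fun s : ℝ => w (x + (s : ℂ) • y) y) (Set.uIcc 0 1) := by
    rw [Set.uIcc_of_le zero_le_one]
    have h1 : ContinuousOn (fun s : ℝ => w (x + (s : ℂ) • y)) (Set.Icc 0 1) := by
      refine hp.continuousOn.comp (by fun_prop) ?_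
      intro s hs
      have := hsy s hs
      simp only [Metric.mem_eball, edist_zero_right] at this ⊢
      rwa [edist_eq_enorm_sub, add_sub_cancel_left]
    exact h1.clm_apply continuousOn_const
  have hint := intervalIntegral.integral_eq_sub_of_hasDerivAt hder hcont.intervalIntegrable
  simp only [Complex.ofReal_one, Complex.ofReal_zero, one_smul, zero_smul, add_zero] at hint
  rw [← hint]
  have hyr : ((‖y‖₊ : NNReal) : ENNReal) < p.radius := by
    rw [Metric.mem_eball, edist_zero_right] at hy
    exact lt_of_lt_of_le hy hp.r_le
  have hsm := (p.summable_norm_mul_pow hyr).mul_right ‖y‖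
  have hscale : ∀ (s : ℝ) (n : ℕ), (p n fun _ => (s : ℂ) • y) y
      = (s : ℂ) ^ n * (p n fun _ => y) y := by
    intro s n
    have := (p n).map_smul_univ (fun _ => (s : ℂ)) (fun _ => y)
    rw [this]
    simp
  have key := intervalIntegral.hasSum_integral_of_dominated_convergence
    (μ := MeasureTheory.volume) (a := 0) (b := 1)
    (F := fun (n : ℕ) (s : ℝ) => (p n fun _ => (s : ℂ) • y) y)
    (f := fun s : ℝ => w (x + (s : ℂ) • y) y)
    (fun n _ => ‖p n‖ * ‖y‖ ^ n * ‖y‖) ?_ ?_ ?_ ?_ ?_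
  · convert key using 2 with n
    simp only [hscale]
    rw [intervalIntegral.integral_mul_const]
    congr 1
    have : ∀ s : ℝ, (s : ℂ) ^ n = ((s ^ n : ℝ) : ℂ) := fun s => by push_cast; rfl
    simp only [this]
    rw [intervalIntegral.integral_ofReal, integral_pow]
    simp
  · intro n
    simp only [hscale]
    exact Continuous.aestronglyMeasurable (by fun_prop)
  · intro n
    refine Filter.Eventually.of_forall fun s hs => ?_
    rw [Set.uIoc_of_le zero_le_one] at hs
    rw [hscale, norm_mul, norm_pow, Complex.norm_real, Real.norm_of_nonneg hs.1.le]
    refine (mul_le_of_le_one_left (norm_nonneg _) (pow_le_one₀ hs.1.le hs.2)).trans ?_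
    refine (ContinuousLinearMap.le_opNorm _ _).trans ?_
    gcongr
    simpa using (p n).le_opNorm (fun _ => y)
  · exact Filter.Eventually.of_forall fun s hs => hsm
  · exact intervalIntegrable_const
  · refine Filter.Eventually.of_forall fun s hs => ?_
    rw [Set.uIoc_of_le zero_le_one] at hs
    have := hp.hasSum (hsy s ⟨hs.1.le, hs.2⟩)
    exact (ContinuousLinearMap.apply ℂ ℂ y).hasSum this
end helpers

lemma pdS_eq_of_hasFDerivAt {N : ℕ} {φ : (Fin N → ℂ) → ℂ} {L : (Fin N → ℂ) →L[ℂ] ℂ}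
    {t : Fin N → ℂ} (h : HasFDerivAt φ L t) (a : Fin N) : pdS a φ t = L (Pi.single a 1) := by
  have h1 := hasDerivAt_update t a (t a)
  have h' : HasFDerivAt φ L (Function.update t a (t a)) := by simpa using h
  exact (h'.comp_hasDerivAt (t a) h1).deriv

lemma pdS_congr {N : ℕ} {φ ψ : (Fin N → ℂ) → ℂ} {U : Set (Fin N → ℂ)} (hU : IsOpen U)
    (h : ∀ t ∈ U, φ t = ψ t) (a : Fin N) {t : Fin N → ℂ} (ht : t ∈ U) : pdS a φ t = pdS a ψ t := by
  apply Filter.EventuallyEq.deriv_eq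
  have hc : ContinuousAt (Function.update t a) (t a) :=
    (hasDerivAt_update t a (t a)).continuousAt
  have : ∀ᶠ z in nhds (t a), Function.update t a z ∈ U :=
    hc (hU.mem_nhds (by simpa using ht))
  exact this.mono fun z hz => h _ hz

lemma exists_potential {N : ℕ} {U : Set (Fin N → ℂ)} (hU : IsOpen U) (hUc : Convex ℝ U)
    (B : Fin N → (Fin N → ℂ) → ℂ)
    (hB : (∀ a, ContDiffOn ℂ ⊤ (B a) U) ∧ ∀ a d, ∀ t ∈ U, pdS d (B a) t = pdS a (B d) t) :
    ∃ f : (Fin N → ℂ) → ℂ, ContDiffOn ℂ ⊤ f U ∧ ∀ a, ∀ t ∈ U, pdS a f t = B a t := by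
  obtain ⟨hB, hc⟩ := hB
  have hBan : ∀ a, AnalyticOnNhd ℂ (B a) U := fun a =>
    hU.analyticOn_iff_analyticOnNhd.1 ((contDiffOn_omega_iff_analyticOn hU.uniqueDiffOn).1 (hB a))
  let w : (Fin N → ℂ) → (Fin N → ℂ) →L[ℂ] ℂ := fun t =>
    ∑ a, B a t • ContinuousLinearMap.proj (R := ℂ) (φ := fun _ : Fin N => ℂ) a
  have hBd : ∀ a, ∀ t ∈ U, HasFDerivAt (B a) (fderiv ℂ (B a) t) t := fun a t ht =>
    (hBan a t ht).differentiableAt.hasFDerivAt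
  have hwd : ∀ t ∈ U, HasFDerivAt w (∑ a, (fderiv ℂ (B a) t).smulRight
      (ContinuousLinearMap.proj (R := ℂ) (φ := fun _ : Fin N => ℂ) a)) t := by
    intro t ht
    exact HasFDerivAt.fun_sum fun a _ => (hBd a t ht).smul_const
      (ContinuousLinearMap.proj a : (Fin N → ℂ) →L[ℂ] ℂ)
  have hexp : ∀ a, ∀ t ∈ U, ∀ u, fderiv ℂ (B a) t u = ∑ d, u d * pdS d (B a) t := by
    intro a t ht u
    conv_lhs => rw [pi_eq_sum_univ' u]
    simp [map_sum, pdS_eq_of_hasFDerivAt (hBd a t ht)]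
  obtain ⟨f, hf⟩ := hUc.exists_forall_hasFDerivWithinAt_of_hasFDerivWithinAt_symmetric
    (fun t ht => ((hwd t ht).restrictScalars ℝ).hasFDerivWithinAt) (by
      intro t ht u _ v _
      simp only [ContinuousLinearMap.coe_restrictScalars', ContinuousLinearMap.sum_apply,
        ContinuousLinearMap.smulRight_apply, ContinuousLinearMap.smul_apply,
        ContinuousLinearMap.proj_apply, smul_eq_mul, hexp _ t ht, Finset.sum_mul]
      rw [Finset.sum_comm]
      refine Finset.sum_congr rfl fun a _ => Finset.sum_congr rfl fun d _ => ?_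
      rw [hc d a t ht]
      ring)
  have hf' : ∀ t ∈ U, HasFDerivAt f (w t) t := fun t ht =>
    (hf t ht).hasFDerivAt (hU.mem_nhds ht)
  refine ⟨f, ?_, ?_⟩
  · rw [contDiffOn_omega_iff_analyticOn hU.uniqueDiffOn, hU.analyticOn_iff_analyticOnNhd]
    intro t ht
    refine analyticAt_of_hasFDerivAt hU ht hf' ?_
    exact Finset.analyticAt_fun_sum _ fun a _ => (hBan a t ht).smul analyticAt_const
  · intro a t ht
    rw [pdS_eq_of_hasFDerivAt (hf' t ht)]
    simp [w, Pi.single_apply]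

/-- Existence of a WDVV potential: totally symmetric, closed structure constants
`A_{abc}` satisfying the associativity condition with respect to a constant symmetric
invertible metric `g` admit a potential `Φ` with `∂_a∂_b∂_cΦ = A_{abc}`, which then
satisfies the WDVV equations. -/
theorem wdvv_potential_exists
    (N : ℕ) (hN : 1 ≤ N)
    (U : Set (Fin N → ℂ)) (hU : IsOpen U) (hUc : Convex ℝ U) (hUne : U.Nonempty)
    (A : Fin N → Fin N → Fin N → (Fin N → ℂ) → ℂ)
    (hA : ∀ a b c, ContDiffOn ℂ ⊤ (A a b c) U)
    (hsymm : ∀ a b c, A a b c = A b a c)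
    (hsymm' : ∀ a b c, A a b c = A a c b)
    (hclosed : ∀ a b c d, ∀ t ∈ U, pdS d (A a b c) t = pdS a (A d b c) t)
    (g ginv : Matrix (Fin N) (Fin N) ℂ)
    (hg : g.transpose = g) (hginv : g * ginv = 1) (hinvg : ginv * g = 1)
    (hassoc : ∀ a b c d, ∀ t ∈ U,
      ∑ e, ∑ f, A a b e t * ginv e f * A f c d t =
        ∑ e, ∑ f, A a d e t * ginv e f * A f b c t) :
    ∃ Φ : (Fin N → ℂ) → ℂ, ContDiffOn ℂ ⊤ Φ U ∧
      (∀ a b c, ∀ t ∈ U, pdS3 a b c Φ t = A a b c t) ∧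
      (∀ a b c d, ∀ t ∈ U,
        ∑ e, ∑ f, pdS3 a b e Φ t * ginv e f * pdS3 f c d Φ t =
          ∑ e, ∑ f, pdS3 a d e Φ t * ginv e f * pdS3 f b c Φ t) := by
  choose! F hF1 hF2 using fun B => exists_potential (N := N) hU hUc B
  have h1 : ∀ b c, (∀ a, ContDiffOn ℂ ⊤ ((fun a => A a b c) a) U) ∧
      ∀ a d, ∀ t ∈ U, pdS d ((fun a => A a b c) a) t = pdS a ((fun a => A a b c) d) t :=
    fun b c => ⟨fun a => hA a b c, fun a d t ht => hclosed a b c d t ht⟩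
  let f2 : Fin N → Fin N → (Fin N → ℂ) → ℂ := fun b c => F (fun a => A a b c)
  have hf2s : ∀ b c, f2 b c = f2 c b := fun b c => by
    simp only [f2]
    congr 1
    funext a
    exact hsymm' a b c
  have hf2 : ∀ a b c, ∀ t ∈ U, pdS a (f2 b c) t = A a b c t := fun a b c t ht =>
    hF2 _ (h1 b c) a t ht
  have h2 : ∀ c, (∀ b, ContDiffOn ℂ ⊤ ((fun b => f2 b c) b) U) ∧
      ∀ b d, ∀ t ∈ U, pdS d ((fun b => f2 b c) b) t = pdS b ((fun b => f2 b c) d) t :=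
    fun c => ⟨fun b => hF1 _ (h1 b c), fun b d t ht => by
      simp only [hf2 _ _ _ t ht, hsymm d b c]⟩
  let f1 : Fin N → (Fin N → ℂ) → ℂ := fun c => F (fun b => f2 b c)
  have hf1 : ∀ b c, ∀ t ∈ U, pdS b (f1 c) t = f2 b c t := fun b c t ht =>
    hF2 _ (h2 c) b t ht
  have h3 : (∀ c, ContDiffOn ℂ ⊤ (f1 c) U) ∧
      ∀ c d, ∀ t ∈ U, pdS d (f1 c) t = pdS c (f1 d) t :=
    ⟨fun c => hF1 _ (h2 c), fun c d t ht => by rw [hf1 _ _ t ht, hf1 _ _ t ht, hf2s]⟩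
  have hmain : ∀ a b c, ∀ t ∈ U, pdS3 a b c (F f1) t = A a b c t := by
    intro a b c t ht
    rw [← hf2 a b c t ht]
    refine pdS_congr hU (fun s hs => ?_) a ht
    rw [← hf1 b c s hs]
    exact pdS_congr hU (fun r hr => hF2 _ h3 c r hr) b hs
  refine ⟨F f1, hF1 _ h3, hmain, ?_⟩
  intro a b c d t ht
  simp only [hmain _ _ _ t ht]
  exact hassoc a b c d t ht
end
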